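/- arXiv:2111.02968 — 5 statements merged into one kernel-verified Lean document; each statement's English description precedes it below -/
import Mathlib

section
/- Define polynomials p_n on [0,1] by p_0(x) = x and p_{n+1}(x) = x² + x·p_n(x) − x²·p_n(x). Then sup_{x ∈ [0,1]} | p_n(x) − x²/(x² − x + 1) | → 0 as n → ∞. -/
open Filter

open Function Set
open scoped NNReal

/-!
For fixed `x` the recursion iterates the affine map `y ↦ x² + x y − x² y`, whose slope is `x − x²`
and whose fixed point is `x² / (x² − x + 1)`. Wherever `‖x − x²‖` is bounded away from `1`, these
maps are contractions with a common constant, so their iterates converge geometrically at a rate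
that does not depend on `x`. On `[0, 1]` the constant is `1 / 4`.
-/

section UniformContraction

variable {α X : Type*} [MetricSpace X] {K : ℝ≥0}

theorem dist_iterate_le_of_isFixedPt {T : X → X} (hT : ContractingWith K T) {y : X}
    (hy : IsFixedPt T y) (x : X) (n : ℕ) :
    dist (T^[n] x) y ≤ K ^ n * (dist x (T x) / (1 - K)) :=
  calc
    dist (T^[n] x) y = dist (T^[n] x) (T^[n] y) := by rw [(hy.iterate n).eq]
    _ ≤ K ^ n * dist x y := by
      simpa only [NNReal.coe_pow] using (hT.toLipschitzWith.iterate n).dist_le_mul x y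
    _ ≤ K ^ n * (dist x (T x) / (1 - K)) := by gcongr; exact hT.dist_le_of_fixedPoint x hy

theorem tendstoUniformlyOn_iterate_of_lipschitzWith {s : Set α} {T : α → X → X} {u f : α → X}
    {C : ℝ} (hK : K < 1) (hT : ∀ a ∈ s, LipschitzWith K (T a)) (hf : ∀ a ∈ s, IsFixedPt (T a) (f a))
    (hu : ∀ a ∈ s, dist (u a) (T a (u a)) ≤ C) :
    TendstoUniformlyOn (fun n a => (T a)^[n] (u a)) f atTop s := by
  rw [Metric.tendstoUniformlyOn_iff]
  intro ε hε
  have hbound : Tendsto (fun n : ℕ => (K : ℝ) ^ n * (C / (1 - K))) atTop (nhds 0) := by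
    simpa only [zero_mul] using
      (tendsto_pow_atTop_nhds_zero_of_lt_one K.coe_nonneg hK).mul_const (C / (1 - K))
  filter_upwards [hbound.eventually_lt_const hε] with n hn a ha
  have hTa : ContractingWith K (T a) := ⟨hK, hT a ha⟩
  have hK' : (0 : ℝ) ≤ 1 - K := hTa.one_sub_K_pos.le
  calc
    dist (f a) ((T a)^[n] (u a)) = dist ((T a)^[n] (u a)) (f a) := dist_comm _ _
    _ ≤ K ^ n * (dist (u a) (T a (u a)) / (1 - K)) :=
      dist_iterate_le_of_isFixedPt hTa (hf a ha) (u a) n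
    _ ≤ K ^ n * (C / (1 - K)) := by gcongr; exact hu a ha
    _ < ε := hn

end UniformContraction

/-- The passage from the tree polynomial of the binary caterpillar `CP_n` to that of `CP_{n+1}`, at
a fixed argument `x`: it sends the value `y = p_n(x)` to `p_{n+1}(x)`. -/
def caterpillarStep {R : Type*} [Ring R] (x y : R) : R :=
  x ^ 2 + x * y - x ^ 2 * y

theorem lipschitzWith_caterpillarStep {R : Type*} [SeminormedRing R] (x : R) :
    LipschitzWith ‖x - x ^ 2‖₊ (caterpillarStep x) := by
  refine LipschitzWith.of_dist_le_mul fun y z => ?_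
  have hslope : caterpillarStep x y - caterpillarStep x z = (x - x ^ 2) * (y - z) := by
    unfold caterpillarStep
    noncomm_ring
  rw [dist_eq_norm, dist_eq_norm, hslope]
  exact norm_mul_le _ _

theorem isFixedPt_caterpillarStep {F : Type*} [Field F] {x : F} (hx : x ^ 2 - x + 1 ≠ 0) :
    IsFixedPt (caterpillarStep x) (x ^ 2 / (x ^ 2 - x + 1)) := by
  unfold IsFixedPt caterpillarStep
  linear_combination -div_mul_cancel₀ (x ^ 2) hx

section NormedField

variable {𝕜 : Type*} [NormedField 𝕜] {x : 𝕜}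

theorem sq_sub_self_add_one_ne_zero (hx : ‖x - x ^ 2‖ < 1) : x ^ 2 - x + 1 ≠ 0 := by
  intro h
  have hone : x - x ^ 2 = 1 := by linear_combination -h
  rw [hone, norm_one] at hx
  exact hx.false

theorem norm_le_two_of_norm_sub_sq_le_one (hx : ‖x - x ^ 2‖ ≤ 1) : ‖x‖ ≤ 2 := by
  have hsq : ‖x‖ ^ 2 ≤ ‖x‖ + 1 :=
    calc
      ‖x‖ ^ 2 = ‖x - (x - x ^ 2)‖ := by rw [sub_sub_cancel, norm_pow]
      _ ≤ ‖x‖ + ‖x - x ^ 2‖ := norm_sub_le _ _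
      _ ≤ ‖x‖ + 1 := by gcongr
  nlinarith

theorem dist_caterpillarStep_le (hx : ‖x - x ^ 2‖ ≤ 1) (y : 𝕜) :
    dist y (caterpillarStep x y) ≤ 2 * ‖y‖ + 4 :=
  calc
    dist y (caterpillarStep x y) = ‖y - (x - x ^ 2) * y - x ^ 2‖ := by
      rw [dist_eq_norm, caterpillarStep]
      congr 1
      ring
    _ ≤ ‖y‖ + ‖x - x ^ 2‖ * ‖y‖ + ‖x‖ ^ 2 := by
      rw [← norm_mul, ← norm_pow]
      exact (norm_sub_le _ _).trans (by gcongr; exact norm_sub_le _ _)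
    _ ≤ ‖y‖ + 1 * ‖y‖ + 2 ^ 2 := by
      gcongr
      exact norm_le_two_of_norm_sub_sq_le_one hx
    _ = 2 * ‖y‖ + 4 := by ring

theorem stmt11_general {s : Set 𝕜} {K : ℝ≥0} {C : ℝ} (hK : K < 1)
    (hs : ∀ x ∈ s, ‖x - x ^ 2‖ ≤ K) (p : ℕ → 𝕜 → 𝕜) (hp0 : ∀ x ∈ s, ‖p 0 x‖ ≤ C)
    (hrec : ∀ n : ℕ, ∀ x ∈ s, p (n + 1) x = x ^ 2 + x * p n x - x ^ 2 * p n x) :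
    TendstoUniformlyOn (fun n x => p n x) (fun x => x ^ 2 / (x ^ 2 - x + 1)) atTop s := by
  have hlt : ∀ x ∈ s, ‖x - x ^ 2‖ < 1 := fun x hx => (hs x hx).trans_lt hK
  have hiter : ∀ n, EqOn (fun x => (caterpillarStep x)^[n] (p 0 x)) (p n) s := by
    intro n x hx
    induction n with
    | zero => rfl
    | succ n ih =>
      simp only [iterate_succ_apply'] at ih ⊢
      rw [ih, hrec n x hx, caterpillarStep]
  have hdisp : ∀ x ∈ s, dist (p 0 x) (caterpillarStep x (p 0 x)) ≤ 2 * C + 4 := fun x hx =>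
    (dist_caterpillarStep_le (hlt x hx).le _).trans (by gcongr; exact hp0 x hx)
  exact (tendstoUniformlyOn_iterate_of_lipschitzWith hK
    (fun x hx => (lipschitzWith_caterpillarStep x).weaken (hs x hx))
    (fun x hx => isFixedPt_caterpillarStep (sq_sub_self_add_one_ne_zero (hlt x hx)))
    hdisp).congr (.of_forall hiter)

end NormedField

theorem norm_sub_sq_le_one_fourth {x : ℝ} (hx : x ∈ Icc (0 : ℝ) 1) : ‖x - x ^ 2‖ ≤ 1 / 4 := by
  have hnonneg : 0 ≤ x - x ^ 2 := by nlinarith [mul_nonneg hx.1 (sub_nonneg.2 hx.2)]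
  rw [Real.norm_of_nonneg hnonneg]
  linarith [sq_nonneg (x - 1 / 2)]

/-- With `p_0(x) = x` and `p_{n+1}(x) = x² + x p_n(x) − x² p_n(x)`,
the functions `p_n` converge uniformly on `[0,1]` to `x²/(x² − x + 1)`. -/
theorem stmt11 (p : ℕ → ℝ → ℝ)
    (hp0 : ∀ x : ℝ, p 0 x = x)
    (hrec : ∀ n : ℕ, ∀ x : ℝ, p (n + 1) x = x ^ 2 + x * p n x - x ^ 2 * p n x) :
    TendstoUniformlyOn (fun n x => p n x) (fun x => x ^ 2 / (x ^ 2 - x + 1)) atTop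
      (Set.Icc (0 : ℝ) 1) := by
  exact stmt11_general (K := 1 / 4) (by norm_num)
    (fun x hx => by simpa using norm_sub_sq_le_one_fourth hx) p
    (fun x hx => by rw [hp0, Real.norm_of_nonneg hx.1]; exact hx.2) fun n x _ => hrec n x
end

section
/- Define polynomials p_n on [0,1] by p_0(x) = x and p_{n+1}(x) = x² + x·p_n(x) − x²·p_n(x). Then lim_{n → ∞} ∫_0^1 p_n(x)/x dx = ∫_0^1 x/(1 − x + x²) dx = π/(3√3). -/
/-!
For `x ≠ 0` the quotient `p_n(x) / x` is an arithmetic-geometric sequence with ratio `x - x²` and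
increment `x`. On `[0, 1]` the ratio lies in `[0, 1)`, so the quotients converge pointwise to the
fixed point `x / (1 - x + x²)`, and boundedly, so dominated convergence applies.
The denominator `1 - x + x²` is invariant under `x ↦ 1 - x`, so the numerator of the limit integral
may be replaced by its mean value `1 / 2`, which leaves an arctangent integral.
-/

open Filter intervalIntegral Real

section ArithGeom

open MeasureTheory

variable {𝕜 : Type*}

lemma tendsto_arithGeom_nhds_of_norm_lt_one [NormedField 𝕜] {a : 𝕜} (b u₀ : 𝕜) (ha : ‖a‖ < 1) :
    Tendsto (arithGeom a b u₀) atTop (nhds (b / (1 - a))) := by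
  have ha₁ : a ≠ 1 := by rintro rfl; simp at ha
  rw [arithGeom_eq' ha₁]
  simpa only [zero_mul, zero_add] using
    ((tendsto_pow_atTop_nhds_zero_of_norm_lt_one ha).mul_const (u₀ - b / (1 - a))).add_const
      (b / (1 - a))

lemma norm_arithGeom_le [NormedField 𝕜] {a : 𝕜} (b u₀ : 𝕜) (ha : ‖a‖ < 1) (n : ℕ) :
    ‖arithGeom a b u₀ n‖ ≤ ‖u₀ - b / (1 - a)‖ + ‖b / (1 - a)‖ := by
  have ha₁ : a ≠ 1 := by rintro rfl; simp at ha
  rw [arithGeom_eq ha₁]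
  refine norm_add_le_of_le ?_ le_rfl
  rw [norm_mul, norm_pow]
  exact mul_le_of_le_one_left (norm_nonneg _) (pow_le_one₀ (norm_nonneg a) ha.le)

variable {α : Type*} [MeasurableSpace α] {μ : Measure α}

lemma aestronglyMeasurable_arithGeom [TopologicalSpace 𝕜] [Mul 𝕜] [ContinuousMul 𝕜] [Add 𝕜]
    [ContinuousAdd 𝕜] {a b u₀ : α → 𝕜} (ha : AEStronglyMeasurable a μ)
    (hb : AEStronglyMeasurable b μ) (hu₀ : AEStronglyMeasurable u₀ μ) (n : ℕ) :
    AEStronglyMeasurable (fun x => arithGeom (a x) (b x) (u₀ x) n) μ := by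
  induction n with
  | zero => exact hu₀
  | succ n ih => exact (ha.mul ih).add hb

theorem tendsto_integral_arithGeom [NormedField 𝕜] [NormedSpace ℝ 𝕜] {a b u₀ : α → 𝕜}
    (ha : AEStronglyMeasurable a μ) (hb : AEStronglyMeasurable b μ) (hu₀ : Integrable u₀ μ)
    (hfix : Integrable (fun x => b x / (1 - a x)) μ) (ha₁ : ∀ᵐ x ∂μ, ‖a x‖ < 1) :
    Tendsto (fun n => ∫ x, arithGeom (a x) (b x) (u₀ x) n ∂μ) atTop
      (nhds (∫ x, b x / (1 - a x) ∂μ)) := by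
  refine tendsto_integral_of_dominated_convergence
    (fun x => ‖u₀ x - b x / (1 - a x)‖ + ‖b x / (1 - a x)‖)
    (aestronglyMeasurable_arithGeom ha hb hu₀.aestronglyMeasurable)
    ((hu₀.sub hfix).norm.add hfix.norm) (fun n => ?_) ?_
  · filter_upwards [ha₁] with x hx using norm_arithGeom_le _ _ hx n
  · filter_upwards [ha₁] with x hx using tendsto_arithGeom_nhds_of_norm_lt_one _ _ hx

end ArithGeom

section IntervalIntegral

open MeasureTheory

theorem integral_smul_of_comp_add_sub_eq {E : Type*} [NormedAddCommGroup E] [NormedSpace ℝ E]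
    {f : ℝ → E} {a b : ℝ} (hf : IntervalIntegrable f volume a b)
    (hsymm : ∀ x ∈ Set.uIcc a b, f (a + b - x) = f x) :
    ∫ x in a..b, x • f x = ((a + b) / 2) • ∫ x in a..b, f x := by
  have hcf : IntervalIntegrable (fun x => (a + b) • f x) volume a b := hf.smul (a + b)
  have hxf : IntervalIntegrable (fun x => x • f x) volume a b :=
    hf.continuousOn_smul continuousOn_id
  have hreflect : ∫ x in a..b, x • f x = (a + b) • (∫ x in a..b, f x) - ∫ x in a..b, x • f x :=
    calc ∫ x in a..b, x • f x
        = ∫ x in a..b, (a + b - x) • f (a + b - x) := by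
          rw [integral_comp_sub_left (fun x => x • f x), add_sub_cancel_right, add_sub_cancel_left]
      _ = ∫ x in a..b, ((a + b) • f x - x • f x) :=
          integral_congr fun x hx => by simp only [hsymm x hx, sub_smul]
      _ = (a + b) • (∫ x in a..b, f x) - ∫ x in a..b, x • f x := by
          rw [integral_sub hcf hxf, intervalIntegral.integral_smul]
  have htwo : (2 : ℝ) • ∫ x in a..b, x • f x = (a + b) • ∫ x in a..b, f x := by
    rw [two_smul]
    exact eq_sub_iff_add_eq.mp hreflect
  rw [div_eq_inv_mul, mul_smul, ← htwo, inv_smul_smul₀ two_ne_zero]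

lemma integral_inv_sub_sq_add_sq {a b c : ℝ} (hc : c ≠ 0) (d : ℝ) :
    ∫ x in a..b, ((x - d) ^ 2 + c ^ 2)⁻¹ =
      c⁻¹ * (arctan ((b - d) / c) - arctan ((a - d) / c)) := by
  rw [integral_comp_sub_right (fun x => (x ^ 2 + c ^ 2)⁻¹)]
  simp only [add_comm _ (c ^ 2)]
  exact integral_inv_sq_add_sq hc

end IntervalIntegral

lemma one_sub_add_sq_pos {R : Type*} [CommRing R] [LinearOrder R] [IsStrictOrderedRing R] (x : R) :
    0 < 1 - x + x ^ 2 := by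
  nlinarith [sq_nonneg (2 * x - 1)]

lemma continuous_inv_one_sub_add_sq : Continuous fun x : ℝ => (1 - x + x ^ 2)⁻¹ :=
  Continuous.inv₀ (by fun_prop) fun x => (one_sub_add_sq_pos x).ne'

lemma integral_inv_one_sub_add_sq :
    ∫ x in (0 : ℝ)..1, (1 - x + x ^ 2)⁻¹ = 2 * π / (3 * √3) := by
  have hsq (x : ℝ) : 1 - x + x ^ 2 = (x - 1 / 2) ^ 2 + (√3 / 2) ^ 2 := by
    rw [div_pow, Real.sq_sqrt (by norm_num)]
    ring
  have hright : (1 - 1 / 2) / (√3 / 2) = (√3)⁻¹ := by field_simp; norm_num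
  have hleft : (0 - 1 / 2) / (√3 / 2) = -(√3)⁻¹ := by field_simp; norm_num
  simp only [hsq]
  rw [integral_inv_sub_sq_add_sq (by positivity), hright, hleft, arctan_neg, arctan_inv_sqrt_three]
  field

theorem integral_div_one_sub_add_sq :
    ∫ x in (0 : ℝ)..1, x / (1 - x + x ^ 2) = π / (3 * √3) := by
  have hsymm (x : ℝ) : (1 - (0 + 1 - x) + (0 + 1 - x) ^ 2)⁻¹ = (1 - x + x ^ 2)⁻¹ := by ring_nf
  calc ∫ x in (0 : ℝ)..1, x / (1 - x + x ^ 2)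
      = ((0 + 1) / 2) • ∫ x in (0 : ℝ)..1, (1 - x + x ^ 2)⁻¹ :=
        integral_smul_of_comp_add_sub_eq (continuous_inv_one_sub_add_sq.intervalIntegrable 0 1)
          fun x _ => hsymm x
    _ = π / (3 * √3) := by
        rw [integral_inv_one_sub_add_sq, smul_eq_mul]
        ring

lemma div_eq_arithGeom_of_succ {K : Type*} [Field K] {x : K} (hx : x ≠ 0) {p : ℕ → K}
    (hp0 : p 0 = x) (hrec : ∀ n, p (n + 1) = x ^ 2 + x * p n - x ^ 2 * p n) (n : ℕ) :
    p n / x = arithGeom (x - x ^ 2) x 1 n := by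
  induction n with
  | zero => rw [hp0, div_self hx, arithGeom_zero]
  | succ n ih =>
    rw [arithGeom_succ, ← ih, hrec]
    field

lemma norm_sub_sq_lt_one {x : ℝ} (hx : x ∈ Set.Icc 0 1) : ‖x - x ^ 2‖ < 1 := by
  obtain ⟨h0, h1⟩ := hx
  rw [Real.norm_of_nonneg (by nlinarith)]
  nlinarith [one_sub_add_sq_pos x]

section Convergence

open MeasureTheory

lemma tendsto_integral_arithGeom_sub_sq :
    Tendsto (fun n => ∫ x in (0 : ℝ)..1, arithGeom (x - x ^ 2) x 1 n) atTop
      (nhds (∫ x in (0 : ℝ)..1, x / (1 - x + x ^ 2))) := by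
  have hfix : IntegrableOn (fun x : ℝ => x / (1 - x + x ^ 2)) (Set.Ioc 0 1) :=
    (continuous_id.mul continuous_inv_one_sub_add_sq).integrableOn_Ioc
  simp only [integral_of_le zero_le_one, sub_add] at hfix ⊢
  refine tendsto_integral_arithGeom (by fun_prop) (by fun_prop) (integrable_const 1) hfix ?_
  filter_upwards [ae_restrict_mem measurableSet_Ioc] with x hx
  exact norm_sub_sq_lt_one (Set.Ioc_subset_Icc_self hx)

end Convergence

/-- With `p_0(x) = x` and `p_{n+1}(x) = x² + x p_n(x) − x² p_n(x)`,
one has `lim_{n → ∞} ∫_0^1 p_n(x)/x dx = ∫_0^1 x/(1 − x + x²) dx = π/(3√3)`. -/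
theorem stmt12 (p : ℕ → ℝ → ℝ)
    (hp0 : ∀ x : ℝ, p 0 x = x)
    (hrec : ∀ n : ℕ, ∀ x : ℝ, p (n + 1) x = x ^ 2 + x * p n x - x ^ 2 * p n x) :
    Tendsto (fun n => ∫ x in (0 : ℝ)..1, p n x / x) atTop
      (nhds (∫ x in (0 : ℝ)..1, x / (1 - x + x ^ 2))) ∧
    (∫ x in (0 : ℝ)..1, x / (1 - x + x ^ 2)) = π / (3 * Real.sqrt 3) := by
  refine ⟨?_, integral_div_one_sub_add_sq⟩
  have hquot (n : ℕ) : ∫ x in (0 : ℝ)..1, p n x / x =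
      ∫ x in (0 : ℝ)..1, arithGeom (x - x ^ 2) x 1 n :=
    integral_congr_Ioo_of_le zero_le_one fun x hx =>
      div_eq_arithGeom_of_succ hx.1.ne' (p := (p · x)) (hp0 x) (hrec · x) n
  simpa only [hquot] using tendsto_integral_arithGeom_sub_sq
end

section
/- Let ρ ∈ (0,1). Then lim_{n → ∞} (1/n)·B(1/n, (1−ρ)^{−n}) = 1 − ρ, where B(a,b) = Γ(a)Γ(b)/Γ(a+b) is the Beta function and Γ is the real Gamma function, and n ranges over the positive integers. -/
open Filter

/-!
Write `s = 1/n`, `x = (1 - ρ)⁻ⁿ`, so that `x ^ s = (1 - ρ)⁻¹` exactly. Log-convexity of `Γ` gives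
Wendel's inequalities `1 ≤ Γ(x) x ^ s / Γ(x + s) ≤ (1 + s / x) ^ (1 - s)` for `0 ≤ s ≤ 1`. Together
with `s Γ(s) → 1` they show that `s B(s, x) x ^ s → 1` whenever `s → 0⁺` and `s / x → 0`.
-/

open Real ProbabilityTheory
open scoped Topology

section Wendel

variable {x s : ℝ}

theorem Gamma_add_le_Gamma_mul_rpow (hx : 0 < x) (hs : s ∈ Set.Icc 0 1) :
    Gamma (x + s) ≤ Gamma x * x ^ s := by
  obtain ⟨hs₀, hs₁⟩ := hs
  have hΓ : 0 < Gamma x := Gamma_pos_of_pos hx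
  have log_convex : log (Gamma ((1 - s) * x + s * (x + 1))) ≤
      (1 - s) * log (Gamma x) + s * log (Gamma (x + 1)) :=
    convexOn_log_Gamma.2 (Set.mem_Ioi.2 hx) (Set.mem_Ioi.2 (by positivity))
      (sub_nonneg.2 hs₁) hs₀ (sub_add_cancel 1 s)
  rw [← log_le_log_iff (Gamma_pos_of_pos (by positivity)) (by positivity)]
  calc log (Gamma (x + s)) = log (Gamma ((1 - s) * x + s * (x + 1))) := by ring_nf
    _ ≤ (1 - s) * log (Gamma x) + s * log (Gamma (x + 1)) := log_convex
    _ = log (Gamma x) + s * log x := by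
      rw [Gamma_add_one hx.ne', log_mul hx.ne' hΓ.ne']
      ring
    _ = log (Gamma x * x ^ s) := by
      rw [log_mul hΓ.ne' (rpow_pos_of_pos hx s).ne', log_rpow hx]

theorem one_le_Gamma_mul_rpow_div_Gamma_add (hx : 0 < x) (hs : s ∈ Set.Icc 0 1) :
    1 ≤ Gamma x * x ^ s / Gamma (x + s) :=
  (one_le_div (Gamma_pos_of_pos (add_pos_of_pos_of_nonneg hx hs.1))).2
    (Gamma_add_le_Gamma_mul_rpow hx hs)

theorem Gamma_mul_rpow_div_Gamma_add_le (hx : 0 < x) (hs : s ∈ Set.Icc 0 1) :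
    Gamma x * x ^ s / Gamma (x + s) ≤ (1 + s / x) ^ (1 - s) := by
  have hxs : 0 < x + s := add_pos_of_pos_of_nonneg hx hs.1
  -- The other Wendel bound, applied to the step of length `1 - s` from `x + s` to `x + 1`.
  have step : x * Gamma x ≤ Gamma (x + s) * (x + s) ^ (1 - s) := by
    simpa only [add_add_sub_cancel, Gamma_add_one hx.ne'] using
      Gamma_add_le_Gamma_mul_rpow hxs (Set.Icc.one_sub_mem hs)
  rw [div_le_iff₀' (Gamma_pos_of_pos hxs)]
  calc Gamma x * x ^ s = x * Gamma x / x ^ (1 - s) := by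
        rw [rpow_sub hx, rpow_one]
        field_simp
    _ ≤ Gamma (x + s) * (x + s) ^ (1 - s) / x ^ (1 - s) := by gcongr
    _ = Gamma (x + s) * (1 + s / x) ^ (1 - s) := by
        rw [mul_div_assoc, ← div_rpow hxs.le hx.le, add_div, div_self hx.ne']

end Wendel

theorem tendsto_self_mul_Gamma_nhdsNE_zero :
    Tendsto (fun s : ℝ => s * Gamma s) (𝓝[≠] 0) (𝓝 1) := by
  refine tendsto_nhdsWithin_congr (fun _ => Gamma_add_one) (tendsto_nhdsWithin_of_tendsto_nhds ?_)
  have hcont : ContinuousAt Gamma (0 + 1) := by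
    rw [zero_add]
    exact (differentiableOn_Gamma_Ioi.differentiableAt (Ioi_mem_nhds one_pos)).continuousAt
  simpa only [zero_add, Gamma_one, Function.comp_def, id] using
    hcont.tendsto.comp (tendsto_id.add_const (1 : ℝ))

section Asymptotics

variable {ι : Type*} {l : Filter ι} {s x : ι → ℝ}

theorem tendsto_Gamma_mul_rpow_div_Gamma_add (hs : ∀ᶠ i in l, s i ∈ Set.Icc 0 1)
    (hx : ∀ᶠ i in l, 0 < x i) (hsx : Tendsto (fun i => s i / x i) l (𝓝 0)) :
    Tendsto (fun i => Gamma (x i) * x i ^ s i / Gamma (x i + s i)) l (𝓝 1) := by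
  have hupper : Tendsto (fun i => 1 + s i / x i) l (𝓝 1) := by
    simpa only [add_zero] using hsx.const_add 1
  refine tendsto_of_tendsto_of_tendsto_of_le_of_le' tendsto_const_nhds hupper ?_ ?_
  · filter_upwards [hs, hx] with i hsi hxi using one_le_Gamma_mul_rpow_div_Gamma_add hxi hsi
  · filter_upwards [hs, hx] with i hsi hxi
    have hbase : 1 ≤ 1 + s i / x i := le_add_of_nonneg_right (div_nonneg hsi.1 hxi.le)
    exact (Gamma_mul_rpow_div_Gamma_add_le hxi hsi).trans
      (rpow_le_self_of_one_le hbase (sub_le_self 1 hsi.1))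

theorem tendsto_mul_beta_mul_rpow (hs : Tendsto s l (𝓝[>] 0)) (hx : ∀ᶠ i in l, 0 < x i)
    (hsx : Tendsto (fun i => s i / x i) l (𝓝 0)) :
    Tendsto (fun i => s i * beta (s i) (x i) * x i ^ s i) l (𝓝 1) := by
  have hs_mem : ∀ᶠ i in l, s i ∈ Set.Icc 0 1 :=
    (hs.eventually (Ioo_mem_nhdsGT one_pos)).mono fun _ h => Set.Ioo_subset_Icc_self h
  have hpole : Tendsto (fun i => s i * Gamma (s i)) l (𝓝 1) :=
    tendsto_self_mul_Gamma_nhdsNE_zero.comp (hs.mono_right (nhdsGT_le_nhdsNE 0))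
  rw [← one_mul (1 : ℝ)]
  refine (hpole.mul (tendsto_Gamma_mul_rpow_div_Gamma_add hs_mem hx hsx)).congr fun i => ?_
  rw [beta, add_comm (x i)]
  ring

theorem tendsto_mul_beta_of_tendsto_rpow {a : ℝ} (ha : a ≠ 0) (hs : Tendsto s l (𝓝[>] 0))
    (hx : ∀ᶠ i in l, 0 < x i) (hsx : Tendsto (fun i => s i / x i) l (𝓝 0))
    (hxs : Tendsto (fun i => x i ^ s i) l (𝓝 a)) :
    Tendsto (fun i => s i * beta (s i) (x i)) l (𝓝 a⁻¹) := by
  rw [← one_div]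
  refine ((tendsto_mul_beta_mul_rpow hs hx hsx).div hxs ha).congr' ?_
  filter_upwards [hx] with i hxi
  exact mul_div_cancel_right₀ _ (rpow_pos_of_pos hxi _).ne'

end Asymptotics

/-- For `ρ ∈ (0,1)`,
`lim_{n → ∞} (1/n) B(1/n, (1−ρ)^{−n}) = 1 − ρ`, where `B(a,b) = Γ(a)Γ(b)/Γ(a+b)`. -/
theorem stmt17 (ρ : ℝ) (hρ : ρ ∈ Set.Ioo (0 : ℝ) 1) :
    Tendsto (fun n : ℕ =>
        (1 / (n : ℝ)) *
          (Real.Gamma (1 / (n : ℝ)) * Real.Gamma (((1 - ρ) ^ n)⁻¹) /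
            Real.Gamma (1 / (n : ℝ) + ((1 - ρ) ^ n)⁻¹)))
      atTop (nhds (1 - ρ)) := by
  have hc₀ : 0 < 1 - ρ := sub_pos.2 hρ.2
  have hc₁ : 1 - ρ < 1 := sub_lt_self 1 hρ.1
  have hs : Tendsto (fun n : ℕ => 1 / (n : ℝ)) atTop (𝓝 0) := tendsto_one_div_atTop_nhds_zero_nat
  have hs_pos : ∀ᶠ n : ℕ in atTop, 1 / (n : ℝ) ∈ Set.Ioi 0 :=
    (eventually_gt_atTop 0).mono fun _ hn => Set.mem_Ioi.2 (one_div_pos.2 (Nat.cast_pos.2 hn))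
  have hsx : Tendsto (fun n : ℕ => 1 / (n : ℝ) / ((1 - ρ) ^ n)⁻¹) atTop (𝓝 0) := by
    simpa only [div_inv_eq_mul, mul_zero] using
      hs.mul (tendsto_pow_atTop_nhds_zero_of_lt_one hc₀.le hc₁)
  have hxs : Tendsto (fun n : ℕ => ((1 - ρ) ^ n)⁻¹ ^ (1 / (n : ℝ))) atTop (𝓝 (1 - ρ)⁻¹) := by
    refine tendsto_const_nhds.congr' ((eventually_ne_atTop 0).mono fun n hn => ?_)
    simp only [← inv_pow, one_div, pow_rpow_inv_natCast (inv_pos.2 hc₀).le hn]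
  simpa only [beta, inv_inv] using tendsto_mul_beta_of_tendsto_rpow (inv_pos.2 hc₀).ne'
    (tendsto_nhdsWithin_iff.2 ⟨hs, hs_pos⟩) (.of_forall fun n => inv_pos.2 (pow_pos hc₀ n)) hsx hxs
end

section
/- Define polynomials p_n on [0,1] by p_1(x) = x and p_{n+1}(x) = 2x·p_n(x) − x·p_n(x)². Then for every x ∈ [0,1] the sequence (p_n(x))_{n ≥ 1} is nonincreasing, and lim_{n → ∞} p_n(x) = φ(x), where φ(x) = max{0, 2 − 1/x} for x ∈ (0,1] and φ(0) = 0 (that is, the limit equals 2 − 1/x for x ∈ [1/2, 1] and 0 for x ∈ [0, 1/2]). Moreover, for each n, ∫_0^1 p_n(x)/x dx is well defined and lim_{n → ∞} ∫_0^1 p_n(x)/x dx = ∫_{1/2}^1 (2 − 1/x)/x dx = ln 4 − 1. -/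
open Filter intervalIntegral

/-!
The polynomials are the iterates `p_n(x) = f_x^n(1)` of the map `f_x(t) = x(1 - (1 - t)²)`. For
`x ∈ [0,1]` the interval `[φ(x), 1]` is stable under `f_x`, where `f_x(t) ≤ t` with equality only at
`t = φ(x)`; hence the iterates decrease to `φ(x)`. Moreover `p_{n+1}(x)/x = 1 - (1 - p_n(x))²` is a
polynomial with values in `[0,1]`, so bounded convergence gives the limit of the integrals.
-/

section BinaryTree

open Set Function Topology MeasureTheory

theorem antitone_iterate_of_mapsTo {α : Type*} [Preorder α] {f : α → α} {s : Set α}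
    (hf : MapsTo f s s) (hle : ∀ y ∈ s, f y ≤ y) {t : α} (ht : t ∈ s) :
    Antitone fun n => f^[n] t :=
  antitone_nat_of_succ_le fun n => by
    rw [iterate_succ_apply']
    exact hle _ (hf.iterate n ht)

theorem tendsto_iterate_of_mapsTo_of_map_le {α : Type*} [ConditionallyCompleteLinearOrder α]
    [TopologicalSpace α] [OrderTopology α] {f : α → α} {s : Set α} {a t : α}
    (hs : IsClosed s) (hbdd : BddBelow s) (hcont : ContinuousOn f s) (hf : MapsTo f s s)
    (hle : ∀ y ∈ s, f y ≤ y) (hfix : ∀ y ∈ s, IsFixedPt f y → y = a) (ht : t ∈ s) :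
    Tendsto (fun n => f^[n] t) atTop (𝓝 a) := by
  have hmem (n : ℕ) : f^[n] t ∈ s := hf.iterate n ht
  obtain ⟨l, hl⟩ : ∃ l, Tendsto (fun n => f^[n] t) atTop (𝓝 l) :=
    ⟨_, tendsto_atTop_ciInf (antitone_iterate_of_mapsTo hf hle ht)
      (hbdd.mono (range_subset_iff.2 hmem))⟩
  have hls : l ∈ s := hs.mem_of_tendsto hl (.of_forall hmem)
  have hfl : Tendsto (fun n => f^[n + 1] t) atTop (𝓝 (f l)) := by
    simp only [iterate_succ_apply']
    exact (hcont l hls).tendsto.comp (tendsto_nhdsWithin_iff.2 ⟨hl, .of_forall hmem⟩)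
  have hl_fixed : IsFixedPt f l := tendsto_nhds_unique hfl ((tendsto_add_atTop_iff_nat 1).2 hl)
  rwa [← hfix l hls hl_fixed]

/-- The recursion map `f_x` of Bernoulli(`x`) site percolation on a binary tree: if each of the two
subtrees below the root independently connects its own root to a given depth with probability `t`,
then the whole tree connects its root one level deeper with probability `f_x(t)`. -/
def percolationStep (x t : ℝ) : ℝ := x * (1 - (1 - t) ^ 2)

/-- The percolation probability `φ(x)` of the infinite binary tree. The value at `0` is set
separately: since `1 / 0 = 0`, the second branch would give `2` there. -/
noncomputable def percolationProb (x : ℝ) : ℝ := if x = 0 then 0 else max 0 (2 - 1 / x)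

/-- The tree polynomial `p_n` of the complete binary tree on `2 ^ n - 1` vertices, extended by
`p_0 = 1` (the empty tree) so that `p_n` is a plain iterate. -/
def binaryTreePoly (n : ℕ) (x : ℝ) : ℝ := (percolationStep x)^[n] 1

variable {x t : ℝ}

theorem percolationProb_nonneg (x : ℝ) : 0 ≤ percolationProb x := by
  unfold percolationProb
  split_ifs
  · exact le_rfl
  · exact le_max_left _ _

theorem percolationProb_of_le_half (h0 : 0 ≤ x) (hx : x ≤ 1 / 2) : percolationProb x = 0 := by
  rcases h0.eq_or_lt with rfl | hpos
  · exact if_pos rfl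
  · have : 2 ≤ 1 / x := by rwa [le_one_div two_pos hpos]
    rw [percolationProb, if_neg hpos.ne', max_eq_left (by linarith)]

theorem percolationProb_of_half_le (hx : 1 / 2 ≤ x) : percolationProb x = 2 - 1 / x := by
  have hpos : 0 < x := by linarith
  have : 1 / x ≤ 2 := by rwa [one_div_le hpos two_pos]
  rw [percolationProb, if_neg hpos.ne', max_eq_right (by linarith)]

theorem percolationProb_le_one (hx : x ∈ Icc 0 1) : percolationProb x ≤ 1 := by
  rcases le_total x (1 / 2) with hhalf | hhalf
  · rw [percolationProb_of_le_half hx.1 hhalf]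
    exact zero_le_one
  · have : 1 ≤ 1 / x := one_le_one_div (by linarith) hx.2
    rw [percolationProb_of_half_le hhalf]
    linarith

theorem isFixedPt_percolationProb (x : ℝ) : IsFixedPt (percolationStep x) (percolationProb x) := by
  unfold percolationProb
  split_ifs with hx
  · simp [IsFixedPt, percolationStep]
  · rcases max_choice 0 (2 - 1 / x) with h | h <;> rw [h, IsFixedPt, percolationStep]
    · ring
    · field_simp
      ring

theorem monotoneOn_percolationStep (hx : 0 ≤ x) : MonotoneOn (percolationStep x) (Iic 1) := by
  intro s _ t (ht : t ≤ 1) hst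
  unfold percolationStep
  gcongr

theorem percolationStep_lt_self (hx : 0 ≤ x) (ht : percolationProb x < t) :
    percolationStep x t < t := by
  have ht0 : 0 < t := (percolationProb_nonneg x).trans_lt ht
  have hslope : 0 < 1 - 2 * x + x * t := by
    rcases hx.eq_or_lt with rfl | hpos
    · norm_num
    · rw [percolationProb, if_neg hpos.ne', max_lt_iff] at ht
      calc 0 < x * (t - (2 - 1 / x)) := mul_pos hpos (sub_pos.2 ht.2)
        _ = 1 - 2 * x + x * t := by field_simp; ring
  have hsub : t - percolationStep x t = t * (1 - 2 * x + x * t) := by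
    unfold percolationStep
    ring
  exact sub_pos.1 (hsub ▸ mul_pos ht0 hslope)

theorem percolationStep_le_self (hx : 0 ≤ x) (ht : percolationProb x ≤ t) :
    percolationStep x t ≤ t := by
  rcases ht.eq_or_lt with rfl | ht
  · exact (isFixedPt_percolationProb x).le
  · exact (percolationStep_lt_self hx ht).le

theorem mapsTo_percolationStep (hx : x ∈ Icc 0 1) :
    MapsTo (percolationStep x) (Icc (percolationProb x) 1) (Icc (percolationProb x) 1) := by
  intro t ⟨hφ, h1⟩
  constructor
  · calc percolationProb x
      _ = percolationStep x (percolationProb x) := (isFixedPt_percolationProb x).symm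
      _ ≤ percolationStep x t :=
        monotoneOn_percolationStep hx.1 (percolationProb_le_one hx) h1 hφ
  · exact (percolationStep_le_self hx.1 hφ).trans h1

theorem tendsto_iterate_percolationStep (hx : x ∈ Icc 0 1) (ht : t ∈ Icc (percolationProb x) 1) :
    Tendsto (fun n => (percolationStep x)^[n] t) atTop (𝓝 (percolationProb x)) := by
  refine tendsto_iterate_of_mapsTo_of_map_le isClosed_Icc bddBelow_Icc ?_
    (mapsTo_percolationStep hx) (fun s hs => percolationStep_le_self hx.1 hs.1) ?_ ht
  · unfold percolationStep
    fun_prop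
  · intro s hs hfix
    exact hs.1.eq_or_lt.elim Eq.symm fun hlt => absurd hfix (percolationStep_lt_self hx.1 hlt).ne

theorem one_mem_Icc_percolationProb (hx : x ∈ Icc 0 1) : 1 ∈ Icc (percolationProb x) 1 :=
  ⟨percolationProb_le_one hx, le_rfl⟩

theorem antitone_binaryTreePoly (hx : x ∈ Icc 0 1) : Antitone fun n => binaryTreePoly n x :=
  antitone_iterate_of_mapsTo (mapsTo_percolationStep hx)
    (fun _ ht => percolationStep_le_self hx.1 ht.1) (one_mem_Icc_percolationProb hx)

theorem tendsto_binaryTreePoly (hx : x ∈ Icc 0 1) :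
    Tendsto (fun n => binaryTreePoly n x) atTop (𝓝 (percolationProb x)) :=
  tendsto_iterate_percolationStep hx (one_mem_Icc_percolationProb hx)

theorem binaryTreePoly_mem_Icc (n : ℕ) (hx : x ∈ Icc 0 1) : binaryTreePoly n x ∈ Icc 0 1 :=
  Icc_subset_Icc_left (percolationProb_nonneg x)
    ((mapsTo_percolationStep hx).iterate n (one_mem_Icc_percolationProb hx))

theorem binaryTreePoly_succ (n : ℕ) (x : ℝ) :
    binaryTreePoly (n + 1) x = percolationStep x (binaryTreePoly n x) :=
  iterate_succ_apply' _ _ _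

theorem eq_binaryTreePoly {u : ℕ → ℝ} (h1 : u 1 = x)
    (hrec : ∀ n, 1 ≤ n → u (n + 1) = 2 * x * u n - x * u n ^ 2) {n : ℕ} (hn : 1 ≤ n) :
    u n = binaryTreePoly n x := by
  induction n, hn using Nat.le_induction with
  | base => simp [h1, binaryTreePoly, percolationStep]
  | succ n hn ih =>
    rw [hrec n hn, ih, binaryTreePoly_succ, percolationStep]
    ring

theorem continuous_binaryTreePoly (n : ℕ) : Continuous (binaryTreePoly n) := by
  induction n with
  | zero => exact continuous_const
  | succ n ih =>
    simp only [funext (binaryTreePoly_succ n), percolationStep]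
    fun_prop

theorem binaryTreePoly_succ_div (n : ℕ) (hx : x ≠ 0) :
    binaryTreePoly (n + 1) x / x = 1 - (1 - binaryTreePoly n x) ^ 2 := by
  rw [binaryTreePoly_succ, percolationStep, mul_div_cancel_left₀ _ hx]

theorem intervalIntegrable_binaryTreePoly_succ_div (n : ℕ) (a b : ℝ) :
    IntervalIntegrable (fun x => binaryTreePoly (n + 1) x / x) volume a b := by
  have hcont : Continuous fun x => 1 - (1 - binaryTreePoly n x) ^ 2 := by
    have := continuous_binaryTreePoly n
    fun_prop
  refine (hcont.intervalIntegrable a b).congr_ae (ae_restrict_of_ae ?_)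
  filter_upwards [Measure.ae_ne volume 0] with x hx
  exact (binaryTreePoly_succ_div n hx).symm

theorem norm_binaryTreePoly_succ_div_le_one (n : ℕ) (hx : x ∈ Ioc 0 1) :
    ‖binaryTreePoly (n + 1) x / x‖ ≤ 1 := by
  obtain ⟨h0, h1⟩ := binaryTreePoly_mem_Icc n (Ioc_subset_Icc_self hx)
  rw [binaryTreePoly_succ_div n hx.1.ne', Real.norm_eq_abs, abs_le]
  constructor <;> nlinarith

theorem tendsto_integral_binaryTreePoly_succ_div :
    Tendsto (fun n => ∫ x in (0 : ℝ)..1, binaryTreePoly (n + 1) x / x) atTop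
      (𝓝 (∫ x in (0 : ℝ)..1, percolationProb x / x)) := by
  refine tendsto_integral_filter_of_dominated_convergence (fun _ => 1)
    (.of_forall fun n => ?_) (.of_forall fun n => .of_forall fun x hx => ?_)
    intervalIntegrable_const (.of_forall fun x hx => ?_)
  · exact (intervalIntegrable_binaryTreePoly_succ_div n 0 1).def'.aestronglyMeasurable
  · rw [uIoc_of_le zero_le_one] at hx
    exact norm_binaryTreePoly_succ_div_le_one n hx
  · rw [uIoc_of_le zero_le_one] at hx
    have hlim := tendsto_binaryTreePoly (Ioc_subset_Icc_self hx)
    exact ((tendsto_add_atTop_iff_nat 1).2 hlim).div_const x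

theorem integral_percolationProb_div :
    ∫ x in (0 : ℝ)..1, percolationProb x / x = ∫ x in (1 / 2 : ℝ)..1, (2 - 1 / x) / x := by
  have hvanish : ∀ x ∈ Ioc (0 : ℝ) 1 \ Ioc (1 / 2) 1, percolationProb x / x = 0 := by
    rintro x ⟨⟨h0, h1⟩, hx⟩
    have hhalf : x ≤ 1 / 2 := not_lt.1 fun h => hx ⟨h, h1⟩
    rw [percolationProb_of_le_half h0.le hhalf, zero_div]
  rw [integral_of_le zero_le_one, integral_of_le (by norm_num : (1 / 2 : ℝ) ≤ 1),
    setIntegral_eq_of_subset_of_forall_sdiff_eq_zero measurableSet_Ioc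
      (Ioc_subset_Ioc_left (by norm_num)) hvanish]
  refine setIntegral_congr_fun measurableSet_Ioc fun x hx => ?_
  simp only [percolationProb_of_half_le hx.1.le]

theorem integral_sub_one_div_div {a b : ℝ} (c : ℝ) (h : (0 : ℝ) ∉ uIcc a b) :
    ∫ x in a..b, (c - 1 / x) / x = c * Real.log (b / a) + (1 / b - 1 / a) := by
  have hsplit (x : ℝ) : (c - 1 / x) / x = c * x⁻¹ - x ^ (-2 : ℤ) := by
    simp only [zpow_neg, zpow_ofNat]
    ring
  have hinv : IntervalIntegrable (fun x : ℝ => x⁻¹) volume a b :=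
    intervalIntegrable_inv_iff.2 (.inr h)
  simp only [hsplit]
  rw [integral_sub (hinv.const_mul c) (intervalIntegrable_zpow (.inr h)),
    intervalIntegral.integral_const_mul, integral_inv h, integral_zpow (.inr ⟨by norm_num, h⟩),
    show (-2 : ℤ) + 1 = -1 by norm_num, zpow_neg_one, zpow_neg_one]
  push_cast
  ring

theorem integral_two_sub_one_div_div :
    ∫ x in (1 / 2 : ℝ)..1, (2 - 1 / x) / x = Real.log 4 - 1 := by
  have hlog : Real.log 4 = 2 * Real.log 2 := by
    rw [show (4 : ℝ) = 2 ^ 2 by norm_num, Real.log_pow, Nat.cast_ofNat]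
  rw [integral_sub_one_div_div 2 (notMem_uIcc_of_lt (by norm_num) one_pos), one_div_one_div, hlog]
  ring

end BinaryTree

/-- With `p_1(x) = x` and `p_{n+1}(x) = 2x p_n(x) − x p_n(x)²`:
for every `x ∈ [0,1]` the sequence `(p_n(x))_{n ≥ 1}` is nonincreasing and converges to
`φ(x)` (`= 2 − 1/x` on `[1/2,1]`, `= 0` on `[0,1/2]`); each `∫_0^1 p_n(x)/x dx` is well
defined, and `lim_n ∫_0^1 p_n(x)/x dx = ∫_{1/2}^1 (2 − 1/x)/x dx = ln 4 − 1`. -/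
theorem stmt18 (p : ℕ → ℝ → ℝ)
    (hp1 : ∀ x : ℝ, p 1 x = x)
    (hrec : ∀ n : ℕ, 1 ≤ n → ∀ x : ℝ, p (n + 1) x = 2 * x * p n x - x * (p n x) ^ 2) :
    (∀ x ∈ Set.Icc (0 : ℝ) 1, ∀ n : ℕ, 1 ≤ n → p (n + 1) x ≤ p n x) ∧
    (∀ x ∈ Set.Icc (0 : ℝ) 1, Tendsto (fun n => p n x) atTop
      (nhds (if x = 0 then 0 else max 0 (2 - 1 / x)))) ∧
    (∀ n : ℕ, 1 ≤ n → IntervalIntegrable (fun x => p n x / x) MeasureTheory.volume 0 1) ∧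
    Tendsto (fun n => ∫ x in (0 : ℝ)..1, p n x / x) atTop
      (nhds (∫ x in (1/2 : ℝ)..1, (2 - 1 / x) / x)) ∧
    (∫ x in (1/2 : ℝ)..1, (2 - 1 / x) / x) = Real.log 4 - 1 := by
  have hp : ∀ n, 1 ≤ n → p n = binaryTreePoly n := fun n hn =>
    funext fun x => eq_binaryTreePoly (u := (p · x)) (hp1 x) (fun m hm => hrec m hm x) hn
  have hp_succ (n : ℕ) : p (n + 1) = binaryTreePoly (n + 1) := hp _ n.succ_pos
  refine ⟨fun x hx n hn => ?_, fun x hx => ?_, fun n hn => ?_, ?_, integral_two_sub_one_div_div⟩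
  · rw [hp_succ, hp n hn]
    exact antitone_binaryTreePoly hx n.le_succ
  · refine (tendsto_binaryTreePoly hx).congr' ?_
    filter_upwards [eventually_ge_atTop 1] with n hn
    rw [hp n hn]
  · obtain ⟨m, rfl⟩ := Nat.exists_eq_add_of_le' hn
    rw [hp_succ]
    exact intervalIntegrable_binaryTreePoly_succ_div m 0 1
  · rw [← integral_percolationProb_div, ← tendsto_add_atTop_iff_nat 1]
    simpa only [hp_succ] using tendsto_integral_binaryTreePoly_succ_div
end

section
/- Let φ : [0,1] → ℝ be given by φ(x) = max{0, 2 − 1/x} for x ∈ (0,1] and φ(0) = 0. Then Σ_{m=0}^{∞} C(2m, m) · ∫_0^1 x^{m−1}(1−x)^m · φ(x) dx = 1, where C(2m,m) denotes the central binomial coefficient (and for m = 0 the integrand x^{−1}φ(x) is integrable since φ vanishes on [0,1/2]). -/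
open intervalIntegral

/-!
For `x ∈ [0, 1]` with `x ≠ 1/2`, evaluating `∑ C(2m,m) tᵐ = 1 / √(1 - 4t)` at `t = x (1 - x)`,
where `1 - 4t = (2x - 1)²`, shows that `m ↦ C(2m,m) (x (1 - x))ᵐ |2x - 1|` is a probability
distribution on `ℕ`. Moreover `φ(x) / x = |2x - 1| g(x)` with `g = x⁻²` on `(1/2, 1]` and `g = 0` on
`(0, 1/2]`. Hence the `m`-th summand is the mass at `m` of the mixture of these distributions with
respect to the probability density `g`.
-/

open MeasureTheory Set

section CentralBinomSeries

theorem succ_nsmul_ringChoose_succ {R : Type*} [NonAssocRing R] [Pow R ℕ] [NatPowAssoc R]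
    [BinomialRing R] (r : R) (n : ℕ) :
    (n + 1) • Ring.choose r (n + 1) = Ring.choose r n * (r - n) := by
  simpa using Ring.choose_smul_choose r n.le_succ

theorem ringChoose_neg_half_mul_neg_four_pow {K : Type*} [Field K] [CharZero K] (n : ℕ) :
    Ring.choose (-(1 / 2) : K) n * (-4) ^ n = n.centralBinom := by
  induction n with
  | zero => simp
  | succ n ih =>
    have choose_succ := succ_nsmul_ringChoose_succ (-(1 / 2) : K) n
    have centralBinom_succ :
        ((n : K) + 1) * (n + 1).centralBinom = 2 * (2 * n + 1) * n.centralBinom :=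
      mod_cast n.succ_mul_centralBinom_succ
    rw [nsmul_eq_mul, Nat.cast_add_one] at choose_succ
    apply mul_left_cancel₀ n.cast_add_one_ne_zero
    rw [centralBinom_succ, ← ih, ← mul_assoc, choose_succ]
    ring

theorem hasSum_ringChoose_mul_pow (a : ℝ) {x : ℝ} (hx : |x| < 1) :
    HasSum (fun n : ℕ => Ring.choose a n * x ^ n) ((1 + x) ^ a) := by
  have hx_mem : x ∈ Metric.eball (0 : ℝ) 1 := by
    simpa [← ENNReal.ofReal_one, Metric.eball_ofReal] using hx
  simpa [binomialSeries, mul_comm] using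
    (Real.one_add_rpow_hasFPowerSeriesOnBall_zero (a := a)).hasSum hx_mem

theorem hasSum_centralBinom_mul_pow {t : ℝ} (ht : |t| < 1 / 4) :
    HasSum (fun n : ℕ => (n.centralBinom : ℝ) * t ^ n) (1 / √(1 - 4 * t)) := by
  obtain ⟨ht_lower, ht_upper⟩ := abs_lt.mp ht
  have h_abs : |-4 * t| < 1 := abs_lt.mpr ⟨by linarith, by linarith⟩
  have h_sum : (1 + -4 * t) ^ (-(1 / 2) : ℝ) = 1 / √(1 - 4 * t) := by
    rw [Real.rpow_neg (by linarith), ← Real.sqrt_eq_rpow, one_div, neg_mul, ← sub_eq_add_neg]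
  simpa only [mul_pow, ← mul_assoc, ringChoose_neg_half_mul_neg_four_pow, h_sum] using
    hasSum_ringChoose_mul_pow (-(1 / 2)) h_abs

theorem hasSum_centralBinom_mul_pow_mul_abs {x : ℝ} (hx : |x * (1 - x)| < 1 / 4) :
    HasSum (fun m : ℕ => m.centralBinom * (x * (1 - x)) ^ m * |2 * x - 1|) 1 := by
  have h_sq : 1 - 4 * (x * (1 - x)) = (2 * x - 1) ^ 2 := by ring
  have h_ne : |2 * x - 1| ≠ 0 := by
    intro h_abs
    have h_zero : 2 * x - 1 = 0 := abs_eq_zero.mp h_abs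
    rw [h_zero] at h_sq
    linarith [(abs_lt.mp hx).2]
  have h_gen := (hasSum_centralBinom_mul_pow hx).mul_right |2 * x - 1|
  rwa [h_sq, Real.sqrt_sq_eq_abs, one_div_mul_cancel h_ne] at h_gen

end CentralBinomSeries

section Mixture

variable {E : Type*} [NormedAddCommGroup E] [NormedSpace ℝ E]

theorem hasSum_integral_smul_of_hasSum_one {α ι : Type*} [MeasurableSpace α] {μ : Measure α}
    [Countable ι] {p : ι → α → ℝ} {g : α → E} (hp_meas : ∀ i, AEStronglyMeasurable (p i) μ)
    (hp_nonneg : ∀ i, 0 ≤ᵐ[μ] p i) (hp_sum : ∀ᵐ x ∂μ, HasSum (fun i => p i x) 1)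
    (hg : Integrable g μ) :
    HasSum (fun i => ∫ x, p i x • g x ∂μ) (∫ x, g x ∂μ) := by
  have h_norm_sum : ∀ᵐ x ∂μ, HasSum (fun i => p i x * ‖g x‖) ‖g x‖ := by
    filter_upwards [hp_sum] with x hx
    simpa only [one_mul] using hx.mul_right ‖g x‖
  refine hasSum_integral_of_dominated_convergence (fun i x => p i x * ‖g x‖)
    (fun i => (hp_meas i).smul hg.1) (fun i => ?_) ?_ ?_ ?_
  · filter_upwards [hp_nonneg i] with x hx
    rw [norm_smul, Real.norm_of_nonneg hx]
  · exact h_norm_sum.mono fun x hx => hx.summable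
  · exact hg.norm.congr (h_norm_sum.mono fun x hx => hx.tsum_eq.symm)
  · filter_upwards [hp_sum] with x hx
    simpa only [one_smul] using hx.smul_const (g x)

theorem hasSum_integral_centralBinom_mul_pow_mul_abs_smul {g : ℝ → E}
    (hg : IntervalIntegrable g volume 0 1) :
    HasSum
      (fun m : ℕ => ∫ x in (0 : ℝ)..1, (m.centralBinom * (x * (1 - x)) ^ m * |2 * x - 1|) • g x)
      (∫ x in (0 : ℝ)..1, g x) := by
  simp only [integral_of_le zero_le_one]
  refine hasSum_integral_smul_of_hasSum_one (fun m => by fun_prop) (fun m => ?_) ?_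
    ((intervalIntegrable_iff_integrableOn_Ioc_of_le zero_le_one).mp hg)
  · filter_upwards [ae_restrict_mem measurableSet_Ioc] with x ⟨hx_pos, hx_le⟩
    have : 0 ≤ 1 - x := sub_nonneg.mpr hx_le
    simp only [Pi.zero_apply]
    positivity
  · have h_ne : ∀ᵐ x : ℝ, x ≠ 1 / 2 := Measure.ae_ne volume _
    filter_upwards [ae_restrict_mem measurableSet_Ioc, ae_restrict_of_ae h_ne]
      with x ⟨hx_pos, hx_le⟩ hx_ne
    have h_sq : 0 < (x - 1 / 2) ^ 2 := sq_pos_of_ne_zero (sub_ne_zero.mpr hx_ne)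
    exact hasSum_centralBinom_mul_pow_mul_abs (abs_lt.mpr ⟨by nlinarith, by linarith⟩)

end Mixture

section Survival

/-- The function `φ`: the probability that the root of the infinite rooted binary tree lies in an
infinite open cluster when each vertex is open independently with probability `x`, that is, the
largest solution `θ` of `θ = x * (2 * θ - θ ^ 2)`. The value at `0` is set separately because
`2 - 1 / 0 = 2` in Lean. -/
noncomputable def survivalProb (x : ℝ) : ℝ :=
  if x = 0 then 0 else max 0 (2 - 1 / x)

/-- The probability density on `ℝ` of `1 / U` for `U` uniformly distributed on `[1, 2]`. -/
noncomputable def invUniformDensity : ℝ → ℝ :=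
  (Ioc (1 / 2) 1).indicator fun x => x ^ (-2 : ℤ)

theorem survivalProb_eq_mul_invUniformDensity {x : ℝ} (hx : x ∈ Ioc 0 1) :
    survivalProb x = x * |2 * x - 1| * invUniformDensity x := by
  obtain ⟨hx_pos, hx_le⟩ := hx
  rw [survivalProb, if_neg hx_pos.ne', invUniformDensity]
  rcases le_or_gt x (1 / 2) with h_le | h_gt
  · have : 2 ≤ 1 / x := (le_div_iff₀ hx_pos).mpr (by linarith)
    rw [indicator_of_notMem fun h => h.1.not_ge h_le, mul_zero, max_eq_left (by linarith)]
  · have : 1 / x ≤ 2 := (div_le_iff₀ hx_pos).mpr (by linarith)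
    rw [indicator_of_mem (mem_Ioc.mpr ⟨h_gt, hx_le⟩), max_eq_right (by linarith),
      abs_of_pos (by linarith), zpow_neg, zpow_ofNat]
    field_simp

theorem zpow_mul_pow_mul_survivalProb {x : ℝ} (hx : x ∈ Ioc 0 1) (m : ℕ) :
    x ^ ((m : ℤ) - 1) * (1 - x) ^ m * survivalProb x =
      (x * (1 - x)) ^ m * |2 * x - 1| * invUniformDensity x := by
  have hx_ne : x ≠ 0 := hx.1.ne'
  rw [survivalProb_eq_mul_invUniformDensity hx, zpow_sub_one₀ hx_ne, zpow_natCast, mul_pow]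
  field_simp

theorem zero_notMem_uIcc_half_one : (0 : ℝ) ∉ uIcc (1 / 2) 1 :=
  notMem_uIcc_of_lt (by norm_num) one_pos

theorem integrable_invUniformDensity : Integrable invUniformDensity := by
  rw [invUniformDensity, integrable_indicator_iff measurableSet_Ioc,
    ← intervalIntegrable_iff_integrableOn_Ioc_of_le (by norm_num)]
  exact intervalIntegrable_zpow (Or.inr zero_notMem_uIcc_half_one)

theorem integral_invUniformDensity : ∫ x in (0 : ℝ)..1, invUniformDensity x = 1 := by
  have h_inter : Ioc (0 : ℝ) 1 ∩ Ioc (1 / 2) 1 = Ioc (1 / 2) 1 :=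
    inter_eq_right.mpr (Ioc_subset_Ioc_left (by norm_num))
  calc
    ∫ x in (0 : ℝ)..1, invUniformDensity x = ∫ x in (1 / 2 : ℝ)..1, x ^ (-2 : ℤ) := by
      rw [integral_of_le zero_le_one, integral_of_le (by norm_num), invUniformDensity,
        setIntegral_indicator measurableSet_Ioc, h_inter]
    _ = 1 := by
      rw [integral_zpow (Or.inr ⟨by norm_num, zero_notMem_uIcc_half_one⟩)]
      norm_num

end Survival

/-- With `φ(x) = max {0, 2 − 1/x}` for `x ∈ (0,1]` and `φ(0) = 0`,
`Σ_{m=0}^∞ C(2m,m) ∫_0^1 x^{m−1} (1−x)^m φ(x) dx = 1`. -/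
theorem stmt19 :
    (∑' m : ℕ, (Nat.choose (2 * m) m : ℝ) *
        ∫ x in (0 : ℝ)..1,
          x ^ ((m : ℤ) - 1) * (1 - x) ^ m * (if x = 0 then 0 else max 0 (2 - 1 / x)))
      = 1 := by
  have h_term (m : ℕ) :
      (m.centralBinom : ℝ) * ∫ x in (0 : ℝ)..1, x ^ ((m : ℤ) - 1) * (1 - x) ^ m * survivalProb x =
        ∫ x in (0 : ℝ)..1,
          (m.centralBinom * (x * (1 - x)) ^ m * |2 * x - 1|) • invUniformDensity x := by
    rw [← intervalIntegral.integral_const_mul]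
    refine integral_congr_Ioo_of_le zero_le_one fun x hx => ?_
    simp only [zpow_mul_pow_mul_survivalProb (Ioo_subset_Ioc_self hx), smul_eq_mul, mul_assoc]
  calc
    _ = ∑' m : ℕ, ∫ x in (0 : ℝ)..1,
          (m.centralBinom * (x * (1 - x)) ^ m * |2 * x - 1|) • invUniformDensity x :=
      tsum_congr h_term
    _ = ∫ x in (0 : ℝ)..1, invUniformDensity x :=
      (hasSum_integral_centralBinom_mul_pow_mul_abs_smul
        integrable_invUniformDensity.intervalIntegrable).tsum_eq
    _ = 1 := integral_invUniformDensity
end
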